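/- arXiv:1706.07406 — 4 statements merged into one kernel-verified Lean document; each statement's English description precedes it below -/
import Mathlib

section
/- Let M > 1 be an integer and define f(y) = ln(y) - y/M for y > 0. Then for every positive integer N with N < M, f(M) - f(N) ≥ 1/(4M² - 2M). -/
/-!
The inequality `log t ≥ 2 (t - 1) / (t + 1)` for `t ≥ 1`, taken at `t = b / a`, gives
`f b - f a ≥ 2 (b - a) / (a + b) - (b - a) / b = (b - a)² / (b (a + b))` for `f y = log y - y / b`.
For `a + 1 ≤ b` the numerator is at least `1` and the denominator at most `b (2 b - 1)`.
-/

lemma two_mul_sub_div_add_le_log_sub_log {a b : ℝ} (ha : 0 < a) (hab : a ≤ b) :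
    2 * (b - a) / (a + b) ≤ Real.log b - Real.log a := by
  have hb : 0 < b := ha.trans_le hab
  calc
    2 * (b - a) / (a + b) = 2 * ((b - a) / a) / ((b - a) / a + 2) := by
      have hden : (b - a) / a + 2 = (a + b) / a := by field_simp; ring
      rw [hden]
      field_simp
    _ ≤ Real.log (1 + (b - a) / a) :=
      Real.le_log_one_add_of_nonneg (div_nonneg (sub_nonneg.2 hab) ha.le)
    _ = Real.log (b / a) := by rw [sub_div, div_self ha.ne', add_sub_cancel]
    _ = Real.log b - Real.log a := Real.log_div hb.ne' ha.ne'

lemma sq_sub_div_le_log_sub_div_sub {a b : ℝ} (ha : 0 < a) (hab : a ≤ b) :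
    (b - a) ^ 2 / (b * (a + b)) ≤ (Real.log b - b / b) - (Real.log a - a / b) := by
  have hb : 0 < b := ha.trans_le hab
  calc
    (b - a) ^ 2 / (b * (a + b)) = 2 * (b - a) / (a + b) - (b / b - a / b) := by
      field_simp
      ring
    _ ≤ (Real.log b - Real.log a) - (b / b - a / b) :=
      sub_le_sub_right (two_mul_sub_div_add_le_log_sub_log ha hab) _
    _ = (Real.log b - b / b) - (Real.log a - a / b) := by ring

theorem allOrNothing_f_gap_below_general {a b : ℝ} (ha : 0 < a) (hab : a + 1 ≤ b) :
    1 / (2 * b ^ 2 - b) ≤ (Real.log b - b / b) - (Real.log a - a / b) := by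
  have hb : 0 < b := by linarith
  have hnum : 1 ≤ (b - a) ^ 2 := one_le_pow₀ (by linarith)
  have hden : b * (a + b) ≤ 2 * b ^ 2 - b := by
    linarith [mul_le_mul_of_nonneg_left hab hb.le]
  calc
    1 / (2 * b ^ 2 - b) ≤ (b - a) ^ 2 / (b * (a + b)) := by gcongr
    _ ≤ (Real.log b - b / b) - (Real.log a - a / b) :=
      sq_sub_div_le_log_sub_div_sub ha (by linarith)

/-- For an integer `M > 1` and `f(y) = ln y - y/M`, every positive integer `N < M`
satisfies `f(M) - f(N) ≥ 1/(4M² - 2M)`. -/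
theorem allOrNothing_f_gap_below (M : ℕ) (hM : 1 < M) (N : ℕ) (hN : 0 < N) (hNM : N < M) :
    (Real.log M - (M : ℝ) / M) - (Real.log N - (N : ℝ) / M) ≥
      1 / (4 * (M : ℝ) ^ 2 - 2 * M) := by
  have hM' : (1 : ℝ) < M := mod_cast hM
  exact (one_div_le_one_div_of_le (by nlinarith) (by nlinarith)).trans
    (allOrNothing_f_gap_below_general (mod_cast hN) (mod_cast hNM))
end

section
/- Let M > 1 be an integer and define f(y) = ln(y) - y/M for y > 0. Then for every integer N with N > M, f(M) - f(N) ≥ 1/(4M² + 2M). -/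
/-!
The gap `f(m) - f(n)` equals `x - 1 - log x` for `x = n / m`. Factoring `x` through the midpoint
`(x + 1) / 2` of `1` and `x` and applying `log t ≤ t - 1` to each of the two factors leaves a
quadratic remainder, so the gap is at least `(n - m)² / (2m(m + n))`. At `n = m + 1` this is
`1 / (4m² + 2m)`, and it is no smaller at any other `n` at distance at least `1` from `m`.
-/

theorem log_le_sub_one_sub_sq_div {x : ℝ} (hx : 0 < x) :
    Real.log x ≤ x - 1 - (x - 1) ^ 2 / (2 * (x + 1)) := by
  have hmid : 0 < (x + 1) / 2 := by positivity
  have hratio : 0 < x / ((x + 1) / 2) := by positivity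
  calc Real.log x
      = Real.log ((x + 1) / 2) + Real.log (x / ((x + 1) / 2)) := by
        rw [← Real.log_mul hmid.ne' hratio.ne', mul_div_cancel₀ x hmid.ne']
    _ ≤ ((x + 1) / 2 - 1) + (x / ((x + 1) / 2) - 1) :=
        add_le_add (Real.log_le_sub_one_of_pos hmid) (Real.log_le_sub_one_of_pos hratio)
    _ = x - 1 - (x - 1) ^ 2 / (2 * (x + 1)) := by
        field_simp
        ring

theorem sq_sub_div_le_log_sub_div_sub_s2 {m n : ℝ} (hm : 0 < m) (hn : 0 < n) :
    (n - m) ^ 2 / (2 * m * (m + n)) ≤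
      (Real.log m - m / m) - (Real.log n - n / m) := by
  have hlog := log_le_sub_one_sub_sq_div (div_pos hn hm)
  rw [Real.log_div hn.ne' hm.ne'] at hlog
  have hquad : (n / m - 1) ^ 2 / (2 * (n / m + 1)) = (n - m) ^ 2 / (2 * m * (m + n)) := by
    field_simp
    ring
  rw [hquad] at hlog
  rw [div_self hm.ne']
  linarith

theorem one_div_le_sq_sub_div {m n : ℝ} (hm : 0 < m) (hn : 0 < n) (hmn : 1 ≤ |n - m|) :
    1 / (4 * m ^ 2 + 2 * m) ≤ (n - m) ^ 2 / (2 * m * (m + n)) := by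
  have hsq : 1 ≤ (n - m) ^ 2 := (one_le_sq_iff_one_le_abs _).2 hmn
  have hsub : n - m ≤ (n - m) ^ 2 :=
    calc n - m ≤ |n - m| := le_abs_self _
      _ ≤ |n - m| ^ 2 := le_self_pow₀ hmn two_ne_zero
      _ = (n - m) ^ 2 := sq_abs _
  have hsum : m + n ≤ (n - m) ^ 2 * (2 * m + 1) :=
    calc m + n = 1 * (2 * m) + (n - m) := by ring
      _ ≤ (n - m) ^ 2 * (2 * m) + (n - m) ^ 2 := by gcongr
      _ = (n - m) ^ 2 * (2 * m + 1) := by ring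
  rw [div_le_div_iff₀ (by positivity) (by positivity)]
  calc 1 * (2 * m * (m + n)) = 2 * m * (m + n) := one_mul _
    _ ≤ 2 * m * ((n - m) ^ 2 * (2 * m + 1)) := by gcongr
    _ = (n - m) ^ 2 * (4 * m ^ 2 + 2 * m) := by ring

theorem allOrNothing_f_gap_above_general {m n : ℝ} (hm : 0 < m) (hn : 0 < n)
    (hmn : 1 ≤ |n - m|) :
    (Real.log m - m / m) - (Real.log n - n / m) ≥ 1 / (4 * m ^ 2 + 2 * m) :=
  (one_div_le_sq_sub_div hm hn hmn).trans (sq_sub_div_le_log_sub_div_sub_s2 hm hn)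

/-- For an integer `M > 1` and `f(y) = ln y - y/M`, every integer `N > M`
satisfies `f(M) - f(N) ≥ 1/(4M² + 2M)`. -/
theorem allOrNothing_f_gap_above (M : ℕ) (hM : 1 < M) (N : ℕ) (hNM : M < N) :
    (Real.log M - (M : ℝ) / M) - (Real.log N - (N : ℝ) / M) ≥
      1 / (4 * (M : ℝ) ^ 2 + 2 * M) := by
  have hdist : (1 : ℝ) ≤ N - M := le_sub_iff_add_le'.2 (by exact_mod_cast hNM)
  exact allOrNothing_f_gap_above_general (Nat.cast_pos.2 (by lia)) (Nat.cast_pos.2 (by lia))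
    (hdist.trans (le_abs_self _))
end

section
/- Let M > 1 be an integer and define f(y) = ln(y) - y/M for y > 0. Then for every positive integer N with N ≠ M, f(M) - f(N) ≥ 1/(5M²). -/
/-!
With `u = y / M` the gap `f M - f y` equals `u - 1 - log u`, so it depends only on `u`. This
quantity is at least `(u - 1)² / (2 max(1, u))`: for `u ≥ 1` this is `x ≤ sinh x` at `x = log u`,
and for `u ≤ 1` it follows from the Padé bound `log v ≥ 2 (v - 1) / (v + 1)` at `v = 1 / u ≥ 1`.
As `max(1, u) ≤ 1 + |u - 1|` and `|u - 1| ≥ 1 / M` with `1 / M ≤ 1`, the gap is at least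
`1 / (4 M²)`.
-/

theorem log_le_half_sub_inv {x : ℝ} (hx : 1 ≤ x) : Real.log x ≤ (x - x⁻¹) / 2 := by
  rw [← Real.sinh_log (by linarith)]
  exact Real.self_le_sinh_iff.mpr (Real.log_nonneg hx)

theorem log_le_two_mul_sub_one_div_add_one {x : ℝ} (hx₀ : 0 < x) (hx₁ : x ≤ 1) :
    Real.log x ≤ 2 * (x - 1) / (x + 1) := by
  have hpade := Real.le_log_one_add_of_nonneg (sub_nonneg.mpr (one_le_inv_iff₀.mpr ⟨hx₀, hx₁⟩))
  rw [add_sub_cancel, Real.log_inv] at hpade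
  calc Real.log x ≤ -(2 * (x⁻¹ - 1) / (x⁻¹ - 1 + 2)) := le_neg_of_le_neg hpade
    _ = 2 * (x - 1) / (x + 1) := by
      rw [show x⁻¹ - 1 + 2 = (x + 1) / x by field_simp; ring]
      field_simp
      ring

theorem sq_div_two_mul_max_le_sub_one_sub_log {x : ℝ} (hx : 0 < x) :
    (x - 1) ^ 2 / (2 * max 1 x) ≤ x - 1 - Real.log x := by
  rcases le_total x 1 with hx₁ | hx₁
  · calc (x - 1) ^ 2 / (2 * max 1 x) = (x - 1) ^ 2 / 2 := by rw [max_eq_left hx₁, mul_one]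
      _ ≤ (x - 1) ^ 2 / (x + 1) := by gcongr; linarith
      _ = x - 1 - 2 * (x - 1) / (x + 1) := by field_simp; ring
      _ ≤ x - 1 - Real.log x := by gcongr; exact log_le_two_mul_sub_one_div_add_one hx hx₁
  · calc (x - 1) ^ 2 / (2 * max 1 x) = x - 1 - (x - x⁻¹) / 2 := by
          rw [max_eq_right hx₁]; field_simp; ring
      _ ≤ x - 1 - Real.log x := by gcongr; exact log_le_half_sub_inv hx₁

theorem sq_div_four_le_sub_one_sub_log {t x : ℝ} (ht₀ : 0 ≤ t) (ht₁ : t ≤ 1) (hx : 0 < x)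
    (htx : t ≤ |x - 1|) : t ^ 2 / 4 ≤ x - 1 - Real.log x := by
  have hmax : max 1 x ≤ 1 + |x - 1| :=
    max_le (by linarith [abs_nonneg (x - 1)]) (by linarith [le_abs_self (x - 1)])
  have hsq : t ^ 2 * (1 + |x - 1|) ≤ 2 * |x - 1| ^ 2 := by
    calc t ^ 2 * (1 + |x - 1|) = t ^ 2 + t * t * |x - 1| := by ring
      _ ≤ |x - 1| ^ 2 + 1 * |x - 1| * |x - 1| := by gcongr
      _ = 2 * |x - 1| ^ 2 := by ring
  calc t ^ 2 / 4 ≤ |x - 1| ^ 2 / (2 * (1 + |x - 1|)) := by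
        rw [div_le_div_iff₀ (by norm_num) (by positivity)]; linarith
    _ ≤ (x - 1) ^ 2 / (2 * max 1 x) := by rw [sq_abs]; gcongr
    _ ≤ x - 1 - Real.log x := sq_div_two_mul_max_le_sub_one_sub_log hx

theorem allOrNothing_f_gap_general {M y : ℝ} (hM : 1 ≤ M) (hy : 0 < y) (hyM : 1 ≤ |y - M|) :
    1 / (4 * M ^ 2) ≤ (Real.log M - M / M) - (Real.log y - y / M) := by
  have hM₀ : 0 < M := by linarith
  have hdist : 1 / M ≤ |y / M - 1| := by
    rw [div_sub_one hM₀.ne', abs_div, abs_of_pos hM₀]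
    gcongr
  calc 1 / (4 * M ^ 2) = (1 / M) ^ 2 / 4 := by field_simp
    _ ≤ y / M - 1 - Real.log (y / M) :=
      sq_div_four_le_sub_one_sub_log (by positivity) ((div_le_one hM₀).mpr hM) (by positivity) hdist
    _ = (Real.log M - M / M) - (Real.log y - y / M) := by
      rw [Real.log_div hy.ne' hM₀.ne', div_self hM₀.ne']
      ring

/-- For an integer `M > 1` and `f(y) = ln y - y/M`, every positive integer `N ≠ M`
satisfies `f(M) - f(N) ≥ 1/(5M²)`. -/
theorem allOrNothing_f_gap (M : ℕ) (hM : 1 < M) (N : ℕ) (hN : 0 < N) (hNM : N ≠ M) :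
    (Real.log M - (M : ℝ) / M) - (Real.log N - (N : ℝ) / M) ≥ 1 / (5 * (M : ℝ) ^ 2) := by
  have hdist : (1 : ℝ) ≤ |(N : ℝ) - M| := by
    exact_mod_cast Int.one_le_abs (sub_ne_zero.mpr (Nat.cast_injective.ne hNM : (N : ℤ) ≠ M))
  calc 1 / (5 * (M : ℝ) ^ 2) ≤ 1 / (4 * (M : ℝ) ^ 2) := by gcongr; norm_num
    _ ≤ _ := allOrNothing_f_gap_general (by exact_mod_cast hM.le) (by exact_mod_cast hN) hdist
end

section
/- Let c_1, …, c_n and M be positive integers. Then there exists x ∈ {0,1}^n such that ∑_{i=1}^n c_i x_i = M if and only if the maximum of ln(∑_{i=1}^n c_i x_i) - (1/M)·∑_{i=1}^n c_i x_i over all x ∈ {0,1}^n with ∑_{i=1}^n c_i x_i > 0 equals ln(M) - 1. -/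
/-!
The inequality `log t ≤ t - 1` at `t = s / M`, strict unless `t = 1`, says that `s ↦ log s - s / M`
on `(0, ∞)` has the unique maximizer `s = M`, with value `log M - 1`. Hence this value is attained
on a set of available sums exactly when `M` is one of them.
-/

/-- The objective of the log-transformed subset-sum problem with target `M`, as a function of the
sum `s = ∑ cᵢ xᵢ`. It is meaningful for `0 < s` and `M ≠ 0`. -/
noncomputable def logObjective (M s : ℝ) : ℝ :=
  Real.log s - (1 / M) * s

namespace logObjective

variable {M s : ℝ}

theorem apply_self (hM : M ≠ 0) : logObjective M M = Real.log M - 1 := by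
  rw [logObjective, one_div_mul_cancel hM]

theorem lt_log_sub_one (hM : 0 < M) (hs : 0 < s) (hne : s ≠ M) :
    logObjective M s < Real.log M - 1 := by
  have hlog : Real.log (s / M) < s / M - 1 :=
    Real.log_lt_sub_one_of_pos (div_pos hs hM) (mt (div_eq_one_iff_eq hM.ne').mp hne)
  rw [Real.log_div hs.ne' hM.ne'] at hlog
  rw [logObjective, one_div_mul_eq_div]
  linarith

theorem le_log_sub_one (hM : 0 < M) (hs : 0 < s) : logObjective M s ≤ Real.log M - 1 := by
  rcases eq_or_ne s M with rfl | hne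
  · exact (apply_self hM.ne').le
  · exact (lt_log_sub_one hM hs hne).le

theorem eq_log_sub_one_iff (hM : 0 < M) (hs : 0 < s) :
    logObjective M s = Real.log M - 1 ↔ s = M :=
  ⟨fun h => by_contra fun hne => (lt_log_sub_one hM hs hne).ne h,
    fun h => h ▸ apply_self (h ▸ hM.ne')⟩

end logObjective

theorem subsetSum_iff_logObjective_max_general {X : Type*} (f : X → ℝ) {M : ℝ} (hM : 0 < M) :
    (∃ x, f x = M) ↔
      IsGreatest {v : ℝ | ∃ x, 0 < f x ∧ v = logObjective M (f x)} (Real.log M - 1) := by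
  constructor
  · rintro ⟨x, rfl⟩
    refine ⟨⟨x, hM, (logObjective.apply_self hM.ne').symm⟩, ?_⟩
    rintro _ ⟨y, hy, rfl⟩
    exact logObjective.le_log_sub_one hM hy
  · rintro ⟨⟨x, hx, hmax⟩, -⟩
    exact ⟨x, (logObjective.eq_log_sub_one_iff hM hx).mp hmax.symm⟩

/-- Subset-sum criterion via the log-transformed objective: for positive integers
`c₁,…,cₙ` and `M`, some binary vector `x` has `∑ cᵢ xᵢ = M` iff the maximum of
`ln(∑ cᵢ xᵢ) - (1/M)·∑ cᵢ xᵢ` over binary `x` with positive sum equals `ln M - 1`. -/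
theorem subsetSum_iff_logObjective_max (n : ℕ) (c : Fin n → ℕ) (hc : ∀ i, 0 < c i)
    (M : ℕ) (hM : 0 < M) :
    (∃ x : Fin n → Bool, (∑ i, if x i then c i else 0) = M) ↔
      IsGreatest
        {v : ℝ | ∃ x : Fin n → Bool,
          (0 < ∑ i, if x i then c i else 0) ∧
          v = Real.log (∑ i, if x i then (c i : ℝ) else 0) -
                (1 / (M : ℝ)) * ∑ i, if x i then (c i : ℝ) else 0}
        (Real.log M - 1) := by
  exact_mod_cast subsetSum_iff_logObjective_max_general
    (fun x : Fin n → Bool => ((∑ i, if x i then c i else 0 : ℕ) : ℝ)) (Nat.cast_pos.mpr hM)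
end
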